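/- arXiv:2206.01121 — 2 statements merged into one kernel-verified Lean document; each statement's English description precedes it below -/
import Mathlib

section
/- Let ℓ ≥ 1 be a natural number and let ξ : ℕ → ℝ satisfy: ξ_i ≥ 0 for all i; ξ_i · sinh(ℓ/i) ≤ 1 for all i with 2 ≤ i ≤ ℓ; and ξ_i ≤ 1/i for all i > ℓ. Then the series ∑_{i=2}^{∞} ξ_i · sinh(ℓ/i) converges and 2ℓ · ∑_{i=2}^{∞} ξ_i · sinh(ℓ/i) ≤ 2·(1 + π²/6 + π⁴/450)·ℓ⁴. -/
theorem sinh_le_two_mul_aux (x : ℝ) (h0 : 0 ≤ x) (h1 : x ≤ 1) : Real.sinh x ≤ 2 * x := by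
  have h2 := (abs_le.mp (Real.abs_exp_sub_one_sub_id_le (x := x) (by rw [abs_of_nonneg h0]; exact h1))).2
  have h3 := Real.add_one_le_exp (-x)
  rw [Real.sinh_eq]
  nlinarith

theorem expected_degree_bound (ℓ : ℕ) (hℓ : 1 ≤ ℓ) (ξ : ℕ → ℝ)
    (hnonneg : ∀ i, 0 ≤ ξ i)
    (hsmall : ∀ i, 2 ≤ i → i ≤ ℓ → ξ i * Real.sinh ((ℓ : ℝ) / (i : ℝ)) ≤ 1)
    (htail : ∀ i, ℓ < i → ξ i ≤ 1 / (i : ℝ)) :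
    Summable (fun k : ℕ => ξ (k + 2) * Real.sinh ((ℓ : ℝ) / ((k + 2 : ℕ) : ℝ))) ∧
      2 * (ℓ : ℝ) * (∑' k : ℕ, ξ (k + 2) * Real.sinh ((ℓ : ℝ) / ((k + 2 : ℕ) : ℝ)))
        ≤ 2 * (1 + Real.pi ^ 2 / 6 + Real.pi ^ 4 / 450) * (ℓ : ℝ) ^ 4 := by
  have hL : (1 : ℝ) ≤ ℓ := by exact_mod_cast hℓ
  have hz : HasSum (fun k : ℕ => (1 : ℝ) / ((k + 2 : ℕ) : ℝ) ^ 2) (Real.pi ^ 2 / 6 - 1) := by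
    have h := (hasSum_nat_add_iff' (f := fun n : ℕ => (1 : ℝ) / (n : ℝ) ^ 2) 2).mpr hasSum_zeta_two
    simpa [Finset.sum_range_succ] using h
  have hi : HasSum (fun k : ℕ => if k ∈ Finset.range ℓ then (1 : ℝ) else 0) (ℓ : ℝ) := by
    have h := hasSum_sum_of_ne_finset_zero
      (f := fun k : ℕ => if k ∈ Finset.range ℓ then (1 : ℝ) else 0) (s := Finset.range ℓ) (L := SummationFilter.unconditional ℕ)
      (fun b hb => if_neg hb)
    have e : ∑ k ∈ Finset.range ℓ, (if k ∈ Finset.range ℓ then (1 : ℝ) else 0) = ℓ := by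
      rw [Finset.sum_congr rfl (fun k hk => if_pos hk)]
      simp
    rwa [e] at h
  have hs := hi.add (hz.mul_left (2 * (ℓ : ℝ)))
  have hpos : ∀ k : ℕ, 0 ≤ ξ (k + 2) * Real.sinh ((ℓ : ℝ) / ((k + 2 : ℕ) : ℝ)) := fun k =>
    mul_nonneg (hnonneg _) (Real.sinh_nonneg_iff.mpr (by positivity))
  have hle : ∀ k : ℕ, ξ (k + 2) * Real.sinh ((ℓ : ℝ) / ((k + 2 : ℕ) : ℝ)) ≤
      (if k ∈ Finset.range ℓ then (1 : ℝ) else 0)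
        + 2 * (ℓ : ℝ) * ((1 : ℝ) / ((k + 2 : ℕ) : ℝ) ^ 2) := by
    intro k
    have hp : 0 ≤ 2 * (ℓ : ℝ) * ((1 : ℝ) / ((k + 2 : ℕ) : ℝ) ^ 2) := by positivity
    by_cases hk : k + 2 ≤ ℓ
    · rw [if_pos (Finset.mem_range.mpr (by omega))]
      linarith [hsmall (k + 2) (by omega) hk]
    · have hk' : ℓ < k + 2 := by omega
      have hc : (0 : ℝ) < ((k + 2 : ℕ) : ℝ) := by positivity
      have hx : (ℓ : ℝ) / ((k + 2 : ℕ) : ℝ) ≤ 1 := by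
        rw [div_le_one hc]; exact_mod_cast hk'.le
      have h1 := sinh_le_two_mul_aux _ (by positivity) hx
      have h2 : ξ (k + 2) * Real.sinh ((ℓ : ℝ) / ((k + 2 : ℕ) : ℝ)) ≤
          1 / ((k + 2 : ℕ) : ℝ) * (2 * ((ℓ : ℝ) / ((k + 2 : ℕ) : ℝ))) :=
        mul_le_mul (htail _ hk') h1 (Real.sinh_nonneg_iff.mpr (by positivity)) (by positivity)
      have h3 : 1 / ((k + 2 : ℕ) : ℝ) * (2 * ((ℓ : ℝ) / ((k + 2 : ℕ) : ℝ))) =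
          2 * (ℓ : ℝ) * ((1 : ℝ) / ((k + 2 : ℕ) : ℝ) ^ 2) := by
        field_simp
      have h4 : (0 : ℝ) ≤ if k ∈ Finset.range ℓ then (1 : ℝ) else 0 := by split_ifs <;> norm_num
      linarith
  have hsum := Summable.of_nonneg_of_le hpos hle hs.summable
  refine ⟨hsum, ?_⟩
  have ht := hasSum_le hle hsum.hasSum hs
  set T := ∑' k : ℕ, ξ (k + 2) * Real.sinh ((ℓ : ℝ) / ((k + 2 : ℕ) : ℝ))
  have hpi : Real.pi ^ 2 ≤ 12 := by nlinarith [Real.pi_lt_d2, Real.pi_pos]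
  have hpi4 : 0 ≤ Real.pi ^ 4 / 450 := by positivity
  set C := 1 + Real.pi ^ 2 / 6 + Real.pi ^ 4 / 450 with hC
  have hC0 : 0 ≤ C := by positivity
  have hT : T ≤ C * ℓ := by
    have : (ℓ : ℝ) + 2 * ℓ * (Real.pi ^ 2 / 6 - 1) ≤ C * ℓ := by
      have : 1 + 2 * (Real.pi ^ 2 / 6 - 1) ≤ C := by rw [hC]; linarith
      nlinarith
    linarith
  calc 2 * (ℓ : ℝ) * T ≤ 2 * ℓ * (C * ℓ) := by gcongr
    _ = 2 * C * (ℓ : ℝ) ^ 2 := by ring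
    _ ≤ 2 * C * (ℓ : ℝ) ^ 4 := by gcongr <;> first | exact hL | norm_num
end

section
/- Let n ≥ 2 and 2 ≤ k ≤ n be natural numbers, and fix an element x of an n-element set (e.g. x : Fin n). Then the number of permutations σ of the set for which the cycle of σ containing x has length exactly k (i.e. the support of the cycle of σ at x has cardinality k) equals (n−1)!. Consequently, under the uniform distribution on permutations, the probability that x lies in a cycle of length k is 1/n. -/
theorem minPer_aux {α : Type*} [DecidableEq α] [Fintype α] (τ : Equiv.Perm α) (a : α) :
    Function.minimalPeriod
      (Equiv.swap none (some a) * Equiv.optionCongr τ : Equiv.Perm (Option α)) none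
      = Function.minimalPeriod τ a + 1 := by
  set σ : Equiv.Perm (Option α) := Equiv.swap none (some a) * Equiv.optionCongr τ with hσ
  set m := Function.minimalPeriod τ a with hm
  have hmpos : 0 < m := Function.minimalPeriod_pos_of_mem_periodicPts
    (Function.Injective.mem_periodicPts τ.injective a)
  have h0 : σ none = some a := by simp [hσ]
  have h1 : ∀ y, τ y ≠ a → σ (some y) = some (τ y) := by
    intro y hy
    simp [hσ, Equiv.swap_apply_def, hy]
  have h2 : ∀ y, τ y = a → σ (some y) = none := by
    intro y hy
    simp [hσ, hy]
  have h3 : ∀ j, j < m → σ^[j + 1] none = some (τ^[j] a) := by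
    intro j
    induction j with
    | zero => intro _; simp [h0]
    | succ j ih =>
      intro hj
      rw [Function.iterate_succ_apply', ih (by omega), h1, Function.iterate_succ_apply']
      rw [← Function.iterate_succ_apply' τ]
      intro h
      exact Function.not_isPeriodicPt_of_pos_of_lt_minimalPeriod (Nat.succ_ne_zero j) hj h
  have h4 : σ^[m + 1] none = none := by
    obtain ⟨j, hj⟩ : ∃ j, m = j + 1 := ⟨m - 1, by omega⟩
    rw [Function.iterate_succ_apply', hj, h3 j (by omega), h2]
    rw [← Function.iterate_succ_apply' τ, Nat.succ_eq_add_one, ← hj]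
    exact Function.isPeriodicPt_minimalPeriod τ a
  have hle : Function.minimalPeriod σ none ≤ m + 1 :=
    Function.IsPeriodicPt.minimalPeriod_le (Nat.succ_pos m) h4
  have hpos : 0 < Function.minimalPeriod σ none := Function.minimalPeriod_pos_of_mem_periodicPts
    (Function.Injective.mem_periodicPts σ.injective none)
  by_contra hne
  obtain ⟨j, hj⟩ : ∃ j, Function.minimalPeriod σ none = j + 1 :=
    ⟨Function.minimalPeriod σ none - 1, by omega⟩
  have h5 := Function.isPeriodicPt_minimalPeriod σ none
  rw [hj] at h5
  have h6 := h3 j (by omega)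
  rw [h5.eq] at h6
  simp at h6

theorem minPer_conj {α β : Type*} (e : α ≃ β) (σ : Equiv.Perm α) (x : α) :
    Function.minimalPeriod (e.permCongr σ) (e x) = Function.minimalPeriod σ x := by
  rw [Function.minimalPeriod_eq_minimalPeriod_iff]
  intro j
  have h : Function.Semiconj e σ (e.permCongr σ) := fun y => by simp
  unfold Function.IsPeriodicPt Function.IsFixedPt
  rw [← (h.iterate_right j).eq]
  exact e.injective.eq_iff

theorem minPer_card (n : ℕ) : ∀ (k : ℕ) (_ : k ≤ n) (x : Fin (n + 1)),
    (Finset.univ.filter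
      (fun σ : Equiv.Perm (Fin (n + 1)) => Function.minimalPeriod σ x = k + 1)).card
      = Nat.factorial n := by
  induction n with
  | zero =>
    intro k hk x
    obtain rfl : k = 0 := by omega
    rw [Finset.filter_true_of_mem]
    · simp
    · intro σ _
      exact Function.minimalPeriod_eq_one_iff_isFixedPt.2 (Subsingleton.elim (α := Fin 1) _ _)
  | succ n ih =>
    intro k hk x
    let E : Equiv.Perm (Fin (n + 2)) ≃ Option (Fin (n + 1)) × Equiv.Perm (Fin (n + 1)) :=
      (finSuccEquiv' x).permCongr.trans Equiv.Perm.decomposeOption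
    have hE : ∀ p, Function.minimalPeriod (E.symm p) x = Function.minimalPeriod
        (Equiv.swap none p.1 * Equiv.optionCongr p.2 :
          Equiv.Perm (Option (Fin (n + 1)))) none := by
      intro p
      rw [← minPer_conj (finSuccEquiv' x), finSuccEquiv'_at]
      congr 2
      rw [← Equiv.Perm.decomposeOption_symm_apply]
      exact (finSuccEquiv' x).permCongr.apply_symm_apply _
    have hc : (Finset.univ.filter
      (fun σ : Equiv.Perm (Fin (n + 2)) => Function.minimalPeriod σ x = k + 1)).card
      = (Finset.univ.filter
      (fun p : Option (Fin (n + 1)) × Equiv.Perm (Fin (n + 1)) =>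
        Function.minimalPeriod (E.symm p) x = k + 1)).card := by
      refine Finset.card_equiv E ?_
      intro σ
      simp
    rw [hc]
    simp only [hE]
    rw [Finset.card_filter, Fintype.sum_prod_type, Fintype.sum_option]
    simp only [minPer_aux]
    have hnone : ∀ τ : Equiv.Perm (Fin (n + 1)), Function.minimalPeriod
        (Equiv.swap none none * Equiv.optionCongr τ :
          Equiv.Perm (Option (Fin (n + 1)))) none = 1 := by
      intro τ
      rw [Function.minimalPeriod_eq_one_iff_isFixedPt]
      simp [Function.IsFixedPt]
    simp only [hnone]
    cases k with
    | zero =>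
      have hp : ∀ (τ : Equiv.Perm (Fin (n + 1))) (a : Fin (n + 1)),
          Function.minimalPeriod τ a ≠ 0 := fun τ a =>
        (Function.minimalPeriod_pos_of_mem_periodicPts
          (Function.Injective.mem_periodicPts τ.injective a)).ne'
      simp [hp, Fintype.card_perm]
    | succ k =>
      have hs : ∀ a : Fin (n + 1), (∑ τ : Equiv.Perm (Fin (n + 1)),
          if Function.minimalPeriod τ a + 1 = k + 1 + 1 then 1 else 0) = Nat.factorial n := by
        intro a
        rw [← ih k (by omega) a, Finset.card_filter]
        simp
      simp only [hs]
      simp [Nat.factorial_succ]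

theorem cycleOf_minPer {n k : ℕ} (hk2 : 2 ≤ k) (x : Fin n) (σ : Equiv.Perm (Fin n)) :
    (σ.cycleOf x).support.card = k ↔ Function.minimalPeriod σ x = k := by
  by_cases hx : σ x = x
  · have h1 : Function.minimalPeriod σ x = 1 :=
      Function.minimalPeriod_eq_one_iff_isFixedPt.2 hx
    rw [(Equiv.Perm.cycleOf_eq_one_iff σ).2 hx, h1]
    simp
    omega
  · have hc := Equiv.Perm.isCycle_cycleOf σ hx
    have key : ∀ j, Function.IsPeriodicPt σ j x ↔ (σ.cycleOf x).support.card ∣ j := by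
      intro j
      rw [← hc.orderOf, orderOf_dvd_iff_pow_eq_one,
        hc.pow_eq_one_iff' (x := x) (by simpa using hx), Equiv.Perm.cycleOf_pow_apply_self,
        ← Equiv.Perm.iterate_eq_pow]
      rfl
    have : Function.minimalPeriod σ x = (σ.cycleOf x).support.card :=
      Nat.dvd_antisymm (((key _).2 dvd_rfl).minimalPeriod_dvd)
        ((key _).1 (Function.isPeriodicPt_minimalPeriod _ _))
    rw [this]

theorem cycle_length_count (n k : ℕ) (hn : 2 ≤ n) (hk2 : 2 ≤ k) (hkn : k ≤ n) (x : Fin n) :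
    (Finset.univ.filter
        (fun σ : Equiv.Perm (Fin n) => (σ.cycleOf x).support.card = k)).card
        = Nat.factorial (n - 1) ∧
      ((Finset.univ.filter
          (fun σ : Equiv.Perm (Fin n) => (σ.cycleOf x).support.card = k)).card : ℝ)
          / (Fintype.card (Equiv.Perm (Fin n)) : ℝ) = 1 / (n : ℝ) := by
  have h : (Finset.univ.filter
        (fun σ : Equiv.Perm (Fin n) => (σ.cycleOf x).support.card = k)).card
        = Nat.factorial (n - 1) := by
    simp only [cycleOf_minPer hk2]
    obtain ⟨m, rfl⟩ : ∃ m, n = m + 1 := ⟨n - 1, by omega⟩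
    obtain ⟨l, rfl⟩ : ∃ l, k = l + 1 := ⟨k - 1, by omega⟩
    exact minPer_card m l (by omega) x
  refine ⟨h, ?_⟩
  rw [h, Fintype.card_perm, Fintype.card_fin, ← Nat.mul_factorial_pred (by omega : n ≠ 0)]
  have h1 : (Nat.factorial (n - 1) : ℝ) ≠ 0 := by exact_mod_cast Nat.factorial_ne_zero _
  have h2 : (n : ℝ) ≠ 0 := by exact_mod_cast (by omega : n ≠ 0)
  push_cast
  field_simp
end
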